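/- Admissible rules for algebraic precision: the following rules are derivable from the generating, congruence, and axiomatic rules of ⊑^C. (PrecAdAdjR) If Γ ⊢ T₁ ⊑^{C*} T₂ and Γ ⊢ t₁ ⊑^C ⟨T₂ ⇒ T₁⟩t₂, then Γ ⊢ ⟨T₁ ⇒ T₂⟩t₁ ⊑^C t₂. (PrecAdAdjL) If Γ ⊢ T₁ ⊑^{C*} T₂ and Γ ⊢ ⟨T₁ ⇒ T₂⟩t₁ ⊑^C t₂, then Γ ⊢ t₁ ⊑^C ⟨T₂ ⇒ T₁⟩t₂. (PrecAdComposeDown) If Γ ⊢ T₁ ⊑^{C*} T₂ ⊑^{C*} T₃, then ⟨T₂ ⇒ T₁⟩⟨T₃ ⇒ T₂⟩t and ⟨T₃ ⇒ T₁⟩t are equi-precise. (PrecAdIsoCast) If T₁ and T₂ are equi-precise (⊑^{C*} in both directions), then t and ⟨T₂ ⇒ T₁⟩⟨T₁ ⇒ T₂⟩t are equi-precise. (PrecAdTrivialCast) t and ⟨T ⇒ T⟩t are equi-precise. (PrecAdSimpleApp) If t₁ and t₁' both synthesize types η-normalizing to the non-dependent function type V₁→V₂, Γ ⊢ t₁ ⊑^C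 t₁', and Γ ⊢ t₂ ⊑^C t₂', then Γ ⊢ t₁ t₂ ⊑^C t₁' t₂'. -/

import Mathlib

set_option autoImplicit true
set_option maxHeartbeats 1000000

namespace CastIf

/-- Head tags of types: Π, 𝔹, Type. -/
inductive Tag : Type
  | pi | bool | type
deriving DecidableEq

/-- CastIf terms (de Bruijn indices).  `unk T` is `?_T`, `err T` is `℧_T`,
    `tag h t` is `⟨h⟩t`, `cast T₁ T₂ t` is `⟨T₁ ⇒ T₂⟩t`. -/
inductive Tm : Type
  | unk   : Tm → Tm                 -- ?_T
  | err   : Tm → Tm                 -- ℧_T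
  | tag   : Tag → Tm → Tm           -- ⟨h⟩t
  | cast  : Tm → Tm → Tm → Tm       -- ⟨T₁ ⇒ T₂⟩t
  | lam   : Tm → Tm → Tm            -- λx:T.t
  | ite   : Tm → Tm → Tm → Tm → Tm  -- if_T t₁ t₂ t₃
  | pi    : Tm → Tm → Tm            -- (x:T₁)→T₂
  | app   : Tm → Tm → Tm            -- t₁ t₂
  | bool  : Tm                      -- 𝔹
  | tt    : Tm                      -- true
  | ff    : Tm                      -- false
  | type  : Nat → Tm                -- Type_ℓ
  | var   : Nat → Tm                -- x
deriving DecidableEq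

/-- shift free de Bruijn variables `≥ c` up by `d` -/
def lift (d : Nat) : Nat → Tm → Tm
  | c, .unk T => .unk (lift d c T)
  | c, .err T => .err (lift d c T)
  | c, .tag h t => .tag h (lift d c t)
  | c, .cast T1 T2 t => .cast (lift d c T1) (lift d c T2) (lift d c t)
  | c, .lam T t => .lam (lift d c T) (lift d (c+1) t)
  | c, .ite T a b e => .ite (lift d c T) (lift d c a) (lift d c b) (lift d c e)
  | c, .pi T1 T2 => .pi (lift d c T1) (lift d (c+1) T2)
  | c, .app a b => .app (lift d c a) (lift d c b)
  | _, .bool => .bool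
  | _, .tt => .tt
  | _, .ff => .ff
  | _, .type l => .type l
  | c, .var n => if n < c then .var n else .var (n + d)

/-- capture-avoiding substitution of `s` for variable `k` -/
def subst (k : Nat) (s : Tm) : Tm → Tm
  | .unk T => .unk (subst k s T)
  | .err T => .err (subst k s T)
  | .tag h t => .tag h (subst k s t)
  | .cast T1 T2 t => .cast (subst k s T1) (subst k s T2) (subst k s t)
  | .lam T t => .lam (subst k s T) (subst (k+1) s t)
  | .ite T a b e => .ite (subst k s T) (subst k s a) (subst k s b) (subst k s e)
  | .pi T1 T2 => .pi (subst k s T1) (subst (k+1) s T2)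
  | .app a b => .app (subst k s a) (subst k s b)
  | .bool => .bool
  | .tt => .tt
  | .ff => .ff
  | .type l => .type l
  | .var n => if n < k then .var n else if n = k then lift k 0 s else .var (n-1)

/-- substitute for the innermost bound variable: `[s/x]t` -/
def subst0 (s t : Tm) : Tm := subst 0 s t

/-- replace the bound variable of `t` (a term under one binder) by `a`,
    where `a` may itself mention the new innermost variable;
    used e.g. for `[⟨T₁' ⇒ T₁⟩x / x]T₂`. -/
def substKeep (a t : Tm) : Tm := subst 0 a (lift 1 1 t)

/-- tag of a type (partial) -/
def tyTagOf : Tm → Option Tag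
  | .pi _ _ => some .pi
  | .bool => some .bool
  | .type _ => some .type
  | _ => none

/-- tag of the type a (well-typed) term must have (partial) -/
def typeTagOf : Tm → Option Tag
  | .tt => some .bool
  | .ff => some .bool
  | .lam _ _ => some .pi
  | .pi _ _ => some .type
  | .bool => some .type
  | .type _ => some .type
  | _ => none

/-- level-1 (least precise) type of a tag at level `l` -/
def L1 (l : Nat) : Tag → Tm
  | .pi => .pi (.unk (.type l)) (.unk (.type l))
  | .bool => .bool
  | .type => .type l

/-- Top-level reductions of CastIf -/
inductive Red : Tm → Tm → Prop
  | beta : Red (.app (.lam T t2) t1) (subst0 t1 t2)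
  | iteTrue : Red (.ite T .tt a b) a
  | iteFalse : Red (.ite T .ff a b) b
  | betaUnk : Red (.app (.unk (.pi T1 T2)) t) (.unk (subst0 t T2))
  | betaErr : Red (.app (.err (.pi T1 T2)) t) (.err (subst0 t T2))
  | iteUnk : Red (.ite T (.unk .bool) a b) (.unk T)
  | iteErr : Red (.ite T (.err .bool) a b) (.err T)
  | unkUnk : Red (.cast (.unk (.type l)) (.unk (.type l)) t) t
  | typeType : typeTagOf t = some .type → Red (.cast (.type l) (.type l) t) t
  | boolBool : typeTagOf t = some .bool → Red (.cast .bool .bool t) t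
  | tagMismatch : tyTagOf T1 = some h1 → tyTagOf T2 = some h2 → h1 ≠ h2 →
      Red (.cast T1 T2 t) (.err T2)
  | fromUnk : tyTagOf T = some h →
      Red (.cast (.unk (.type l)) T (.tag h t)) (.cast (L1 l h) T t)
  | fromUnkErr : tyTagOf T = some h' → h ≠ h' →
      Red (.cast (.unk (.type l)) T (.tag h t)) (.err T)
  | toUnk : tyTagOf T = some h → h ≠ Tag.pi →
      Red (.cast T (.unk (.type l)) t) (.tag h (.cast T (L1 l h) t))
  | fromErr : Red (.cast (.err (.type l)) T t) (.err T)
  | castErr : Red (.cast T1 T2 (.err T1)) (.err T2)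
  | toErr : Red (.cast T (.err (.type l)) t) (.err (.err (.type l)))
  | piUnk :
      Red (.cast (.pi T1 T2) (.unk (.type l)) t)
        (.tag .pi (.lam (.unk (.type l))
          (.cast (lift 1 0 (subst0 (.unk T1) T2)) (.unk (.type l))
            (.app (lift 1 0 t) (.unk (lift 1 0 T1))))))
  | piPi :
      Red (.cast (.pi T1 T2) (.pi T1' T2') t)
        (.lam T1'
          (.cast (substKeep (.cast (lift 1 0 T1') (lift 1 0 T1) (.var 0)) T2) T2'
            (.app (lift 1 0 t) (.cast (lift 1 0 T1') (lift 1 0 T1) (.var 0)))))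

/-- One-step reduction: compatible (contextual) closure of `Red` -/
inductive Step : Tm → Tm → Prop
  | red : Red t t' → Step t t'
  | unk : Step T T' → Step (.unk T) (.unk T')
  | err : Step T T' → Step (.err T) (.err T')
  | tag : Step t t' → Step (.tag h t) (.tag h t')
  | castSrc : Step T1 T1' → Step (.cast T1 T2 t) (.cast T1' T2 t)
  | castTgt : Step T2 T2' → Step (.cast T1 T2 t) (.cast T1 T2' t)
  | castTm : Step t t' → Step (.cast T1 T2 t) (.cast T1 T2 t')
  | lamTy : Step T T' → Step (.lam T t) (.lam T' t)
  | lamBody : Step t t' → Step (.lam T t) (.lam T t')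
  | iteTy : Step T T' → Step (.ite T a b e) (.ite T' a b e)
  | iteScrut : Step a a' → Step (.ite T a b e) (.ite T a' b e)
  | iteThen : Step b b' → Step (.ite T a b e) (.ite T a b' e)
  | iteElse : Step e e' → Step (.ite T a b e) (.ite T a b e')
  | piDom : Step T1 T1' → Step (.pi T1 T2) (.pi T1' T2)
  | piCod : Step T2 T2' → Step (.pi T1 T2) (.pi T1 T2')
  | appFun : Step a a' → Step (.app a b) (.app a' b)
  | appArg : Step b b' → Step (.app a b) (.app a b')

/-- Multi-step reduction `→*` -/
def StepStar : Tm → Tm → Prop := Relation.ReflTransGen Step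

def notErr : Tm → Prop
  | .err _ => False
  | _ => True

def notUnk : Tm → Prop
  | .unk _ => False
  | _ => True

def notPi : Tm → Prop
  | .pi _ _ => False
  | _ => True

mutual
  /-- Neutral terms: normal terms blocked on a variable -/
  inductive Neu : Tm → Prop
    | var : Neu (.var n)
    | app : Neu N → Val v → Neu (.app N v)
    | ite : Val V → Neu N → Val v2 → Val v3 → Neu (.ite V N v2 v3)
    | castSrcNe : Neu N → Val V → Val v → notErr v → Neu (.cast N V v)
    | castTgtNe : Val V → Neu N → Val v → notErr v → Neu (.cast V N v)
    | castBoth : Val V1 → notErr V1 → notUnk V1 → notPi V1 →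
        Val V2 → notErr V2 → notUnk V2 → notPi V2 → Neu N → Neu (.cast V1 V2 N)
    | castFromUnk : Val V → notErr V → notUnk V → Neu N →
        Neu (.cast (.unk (.type l)) V N)
  /-- Values (normal forms) -/
  inductive Val : Tm → Prop
    | neu : Neu N → Val N
    | unk : Val V → Val (.unk V)
    | err : Val V → Val (.err V)
    | tag : Val v → Val (.tag h v)
    | type : Val (.type l)
    | lam : Val v → Val (.lam T v)
    | pi : Val V1 → Val V2 → Val (.pi V1 V2)
    | bool : Val .bool
    | tt : Val .tt
    | ff : Val .ff
end

/-- de Bruijn context lookup (types appropriately shifted) -/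
def lookup : List Tm → Nat → Option Tm
  | [], _ => none
  | T :: _, 0 => some (lift 1 0 T)
  | _ :: G, n+1 => (lookup G n).map (lift 1 0)

/-- Type-directed η-expansion of normal forms: `Γ ⊢ v ⟶η v' : V`.
    Neutral terms, `?`, and `℧` of Π-type are expanded into λ-abstractions;
    the remaining rules are structural. -/
inductive Eta : List Tm → Tm → Tm → Tm → Prop
  | neuPi : Neu N → Eta (V1 :: G) (.app (lift 1 0 N) (.var 0)) v V2 →
      Eta G N (.lam V1 v) (.pi V1 V2)
  | unkPi : Eta (V1 :: G) V2 V2' (.type l) →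
      Eta G (.unk (.pi V1 V2)) (.lam V1 (.unk V2')) (.pi V1 V2)
  | errPi : Eta (V1 :: G) V2 V2' (.type l) →
      Eta G (.err (.pi V1 V2)) (.lam V1 (.err V2')) (.pi V1 V2)
  | neuBase : Neu N → notPi V → Eta G N N V
  | unkBase : notPi V → Eta G (.unk V) (.unk V) V
  | errBase : notPi V → Eta G (.err V) (.err V) V
  | lam : Eta (V1 :: G) v v' V2 → Eta G (.lam V1 v) (.lam V1 v') (.pi V1 V2)
  | pi : Eta G V1 V1' (.type l) → Eta (V1 :: G) V2 V2' (.type l) →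
      Eta G (.pi V1 V2) (.pi V1' V2') (.type l)
  | bool : Eta G .bool .bool (.type l)
  | type : Eta G (.type l) (.type l) (.type (l+1))
  | tt : Eta G .tt .tt .bool
  | ff : Eta G .ff .ff .bool
  | tag : Val v → Eta G (.tag h v) (.tag h v) (.unk (.type l))

/-- Normalization with η-expansion: `Γ ⊢ t ⟶*η v : T` -/
def NormEta (G : List Tm) (t v T : Tm) : Prop :=
  ∃ v', StepStar t v' ∧ Eta G v' v T

mutual
  /-- Bidirectional type synthesis `Γ ⊢ t ⇒ T` for CastIf -/
  inductive Synth : List Tm → Tm → Tm → Prop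
    | var : lookup G n = some T → Synth G (.var n) T
    | type : Synth G (.type l) (.type (l+1))
    | bool : Synth G .bool (.type 0)
    | tt : Synth G .tt .bool
    | ff : Synth G .ff .bool
    | pi : Synth G T1 (.type l1) → Synth (T1 :: G) T2 (.type l2) →
        Synth G (.pi T1 T2) (.type (max l1 l2))
    | app : Synth G t0 T → Synth G T (.type l) → NormEta G T (.pi V1 V2) (.type l) →
        Check G t1 V1 → Synth G (.app t0 t1) (subst0 t1 V2)
    | lam : Synth (T1 :: G) t T2 → Synth G (.lam T1 t) (.pi T1 T2)
    | ite : Check G t1 .bool → Synth G T (.type l) → Check G t2 T → Check G t3 T →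
        Synth G (.ite T t1 t2 t3) T
    | cast : Synth G T1 (.type l) → Check G t T1 → Check G T2 (.type l) →
        Synth G (.cast T1 T2 t) T2
    | tag : h ≠ Tag.pi → Check G t (L1 l h) → Synth G (.tag h t) (.unk (.type l))
    | tagFun : Check G v (.unk (.type l)) →
        Synth G (.tag .pi (.lam (.unk (.type l)) (lift 1 0 v))) (.unk (.type l))
    | unk : Synth G T (.type l) → Synth G (.unk T) T
    | err : Synth G T (.type l) → Synth G (.err T) T
  /-- Bidirectional type checking `Γ ⊢ t ⇐ T`: the sole rule is conversion,
      requiring the synthesized and checked types to share an η-normal form. -/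
  inductive Check : List Tm → Tm → Tm → Prop
    | conv : Synth G t T' → Synth G T' (.type l) → Check G T (.type l) →
        NormEta G T V (.type l) → NormEta G T' V (.type l) → Check G t T
end

/-- `Γ ⊢ t : T` means `t` synthesizes `T` or checks against `T` -/
def HasType (G : List Tm) (t T : Tm) : Prop := Synth G t T ∨ Check G t T

/-- `Γ ⊢ t ▸ V`: `t` synthesizes a type that η-normalizes to `V` -/
def PSynth (G : List Tm) (t V : Tm) : Prop :=
  ∃ T l, Synth G t T ∧ NormEta G T V (.type l)

/-- `Γ ⊢ T ⟶*η V` for a type `T` (at some universe level) -/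
def NormEtaTy (G : List Tm) (T V : Tm) : Prop := ∃ l, NormEta G T V (.type l)

mutual
  /-- Algebraic precision `Γ ⊢ t₁ ⊑^C t₂`: generating and structural rules
      plus the axioms describing the behaviour of casts. -/
  inductive Prec : List Tm → Tm → Tm → Prop
    | genUnk : PSynth G t V → NormEtaTy G T V → Prec G t (.unk T)
    | genErr : NormEtaTy G T V → PSynth G t V → Prec G (.err T) t
    | congApp : PSynth G t1 (.pi V1 V2) → PSynth G t1' (.pi V1 V2) →
        StepStar (subst0 t2 V2) T → StepStar (subst0 t2' V2) T' →
        Prec G t1 t1' → Prec G t2 t2' →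
        Prec G (.cast T T' (.app t1 t2)) (.app t1' t2')
    | congPi : Prec G T1 T1' →
        Prec (T1' :: G) (substKeep (.cast (lift 1 0 T1') (lift 1 0 T1) (.var 0)) T2) T2' →
        Prec G (.pi T1 T2) (.pi T1' T2')
    | congCast : Prec G t t' → Prec G (.cast T1 T2 t) (.cast T1 T2 t')
    | congLam : Prec (T :: G) t1 t2 → Prec G (.lam T t1) (.lam T t2)
    | congTag : Prec G t1 t2 → Prec G (.tag h t1) (.tag h t2)
    | congIte : Prec G t1 t1' → Prec G t2 t2' → Prec G t3 t3' →
        Prec G (.ite T t1 t2 t3) (.ite T t1' t2' t3')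
    | refl : Prec G t t
    | trans : Prec G t1 t2 → Prec G t2 t3 → Prec G t1 t3
    | eta :
        Prec G (.cast (.pi T1 T2) (.pi T1' T2') t)
          (.lam T1'
            (.cast (substKeep (.cast (lift 1 0 T1') (lift 1 0 T1) (.var 0)) T2) T2'
              (.app (lift 1 0 t) (.cast (lift 1 0 T1') (lift 1 0 T1) (.var 0)))))
    | castBot : Prec G (.cast T1 T2 (.err T1)) (.err T2)
    | upDown : PrecStar G T1 T2 → Prec G t (.cast T2 T1 (.cast T1 T2 t))
    | downUp : PrecStar G T1 T2 → Prec G (.cast T1 T2 (.cast T2 T1 t)) t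
    | intermed : PrecStar G T1 T2 →
        Prec G (.cast T1 T' (.cast T T1 t)) (.cast T2 T' (.cast T T2 t))
    | composeUp : PrecStar G T1 T2 → PrecStar G T2 T3 →
        Prec G (.cast T2 T3 (.cast T1 T2 t)) (.cast T1 T3 t)
    | composeUpInv : PrecStar G T1 T2 → PrecStar G T2 T3 →
        Prec G (.cast T1 T3 t) (.cast T2 T3 (.cast T1 T2 t))
  /-- Precision modulo normalization `Γ ⊢ T₁ ⊑^{C*} T₂` -/
  inductive PrecStar : List Tm → Tm → Tm → Prop
    | norm : StepStar T1 V1 → StepStar T2 V2 → Prec G V1 V2 → PrecStar G T1 T2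
end

theorem subst_lift_self (s t : Tm) : ∀ k, subst k s (lift 1 k t) = t := by
  induction t with
  | var n =>
    intro k
    by_cases h : n < k
    · simp [lift, subst, h]
    · have h1 : ¬ (n + 1 < k) := by omega
      have h2 : ¬ (n + 1 = k) := by omega
      simp [lift, subst, h, h1, h2]
  | _ => intro k; simp_all [lift, subst]

theorem PrecStar.rfl' (G : List Tm) (T : Tm) : PrecStar G T T :=
  .norm Relation.ReflTransGen.refl Relation.ReflTransGen.refl .refl

theorem trivL (G : List Tm) (T t : Tm) : Prec G t (.cast T T t) :=
  .trans (.upDown (PrecStar.rfl' G T)) (.composeUp (PrecStar.rfl' G T) (PrecStar.rfl' G T))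

theorem trivR (G : List Tm) (T t : Tm) : Prec G (.cast T T t) t :=
  .trans (.composeUpInv (PrecStar.rfl' G T) (PrecStar.rfl' G T)) (.downUp (PrecStar.rfl' G T))

/-- **Admissible rules for algebraic precision.** -/
theorem admissible_rules_for_precision :
    -- PrecAdAdjR
    (∀ (G : List Tm) (T1 T2 t1 t2 : Tm),
       PrecStar G T1 T2 → Prec G t1 (.cast T2 T1 t2) →
         Prec G (.cast T1 T2 t1) t2) ∧
    -- PrecAdAdjL
    (∀ (G : List Tm) (T1 T2 t1 t2 : Tm),
       PrecStar G T1 T2 → Prec G (.cast T1 T2 t1) t2 →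
         Prec G t1 (.cast T2 T1 t2)) ∧
    -- PrecAdComposeDown
    (∀ (G : List Tm) (T1 T2 T3 t : Tm),
       PrecStar G T1 T2 → PrecStar G T2 T3 →
         Prec G (.cast T2 T1 (.cast T3 T2 t)) (.cast T3 T1 t) ∧
         Prec G (.cast T3 T1 t) (.cast T2 T1 (.cast T3 T2 t))) ∧
    -- PrecAdIsoCast
    (∀ (G : List Tm) (T1 T2 t : Tm),
       PrecStar G T1 T2 → PrecStar G T2 T1 →
         Prec G t (.cast T2 T1 (.cast T1 T2 t)) ∧
         Prec G (.cast T2 T1 (.cast T1 T2 t)) t) ∧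
    -- PrecAdTrivialCast
    (∀ (G : List Tm) (T t : Tm),
       Prec G t (.cast T T t) ∧ Prec G (.cast T T t) t) ∧
    -- PrecAdSimpleApp (non-dependent function type V₁ → V₂)
    (∀ (G : List Tm) (t1 t1' t2 t2' V1 V2 : Tm),
       PSynth G t1 (.pi V1 (lift 1 0 V2)) → PSynth G t1' (.pi V1 (lift 1 0 V2)) →
       Prec G t1 t1' → Prec G t2 t2' →
         Prec G (.app t1 t2) (.app t1' t2')) := by
  refine ⟨?_, ?_, ?_, ?_, ?_, ?_⟩
  · intro G T1 T2 t1 t2 h p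
    exact .trans (.congCast p) (.downUp h)
  · intro G T1 T2 t1 t2 h p
    exact .trans (.upDown h) (.congCast p)
  · intro G T1 T2 T3 t h12 h23
    refine ⟨.trans (.intermed h23) (.congCast (trivR _ _ _)), ?_⟩
    exact .trans (.upDown h12) (.congCast (.trans (.intermed h12) (trivR _ _ _)))
  · intro G T1 T2 t h h'
    exact ⟨.upDown h, .downUp h'⟩
  · intro G T t
    exact ⟨trivL _ _ _, trivR _ _ _⟩
  · intro G t1 t1' t2 t2' V1 V2 h h' p q
    have e : ∀ s, StepStar (subst0 s (lift 1 0 V2)) V2 := fun s => by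
      rw [subst0, subst_lift_self]
      exact Relation.ReflTransGen.refl
    exact .trans (trivL G V2 _) (.congApp h h' (e _) (e _) p q)

end CastIf
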